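/- Let n ≥ 1, let k ∈ ℝⁿ be a nonzero vector, let c1 > 0, c2 ≥ 0 and φ_ρ, φ_u be real numbers, and let c4, c5 ∈ ℂ be complex numbers with c4·c5 = c3 for some real c3 > 0. Then the characteristic polynomial of the (n+1)×(n+1) complex matrix N_k (defined in the context) factors as det(X·I − N_k) = (X + c1|k|² + φ_u)^{n−1} · (X² + ((c1+c2)|k|² + φ_u)·X + c3·(1+φ_ρ)·|k|²). -/

import Mathlib

open Polynomial Matrix

/-!
Evaluate both sides at a complex number `x ≠ 0`. The Schur complement of the `1 × 1` block `x` in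
`x • 1 - N_k` is a rank-one perturbation `a • 1 + s • (k ⊗ k)` of a scalar matrix, where
`a = x + c1|k|² + φu` and `s = c2 + c3(1 + φρ) / x`. Its determinant is `a ^ (n - 1) * (a + s|k|²)`
(`det_smul_one_add_vecMulVec`), and multiplying by `x` gives the right-hand side at `x`. Two
polynomials that agree off `0` over the infinite field `ℂ` are equal.
-/

theorem det_smul_one_add_vecMulVec (n : ℕ) (hn : 1 ≤ n) (a : ℂ) (u v : Fin n → ℂ) :
    (a • (1 : Matrix (Fin n) (Fin n) ℂ) + vecMulVec u v).det = a ^ (n - 1) * (a + u ⬝ᵥ v) := by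
  -- The determinant is the characteristic polynomial of `vecMulVec (-u) v` evaluated at `a`.
  have h := congrArg (Polynomial.eval a) (charpoly_vecMulVec (-u) v)
  rw [eval_charpoly] at h
  have e : scalar (Fin n) a - vecMulVec (-u) v = a • (1 : Matrix (Fin n) (Fin n) ℂ)
      + vecMulVec u v := by
    rw [neg_vecMulVec, sub_neg_eq_add, smul_one_eq_diagonal, scalar_apply]
  rw [e] at h
  obtain ⟨m, rfl⟩ : ∃ m, n = m + 1 := ⟨n - 1, by omega⟩
  rw [h]
  simp [pow_succ]
  ring

/-- The characteristic polynomial of the (n+1)×(n+1) complex mode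
matrix `N_k` factors as `(X + c1|k|² + φu)^(n-1)
  * (X² + ((c1+c2)|k|² + φu)·X + c3(1+φρ)|k|²)`. -/
theorem charpoly_Nk (n : ℕ) (hn : 1 ≤ n) (k : Fin n → ℝ) (hk : k ≠ 0)
    (c1 c2 c3 φρ φu : ℝ) (hc1 : 0 < c1) (hc2 : 0 ≤ c2) (hc3 : 0 < c3)
    (c4 c5 : ℂ) (hc45 : c4 * c5 = (c3 : ℂ)) :
    (Matrix.fromBlocks
        (0 : Matrix Unit Unit ℂ)
        (Matrix.of fun (_ : Unit) (j : Fin n) => c4 * (1 + (φρ : ℂ)) * (k j : ℂ))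
        (Matrix.of fun (i : Fin n) (_ : Unit) => -c5 * (k i : ℂ))
        ((-(((c1 * (∑ j, k j ^ 2) + φu) : ℝ) : ℂ)) • (1 : Matrix (Fin n) (Fin n) ℂ)
          - ((c2 : ℝ) : ℂ) • Matrix.vecMulVec (fun j => ((k j : ℝ) : ℂ))
              (fun j => ((k j : ℝ) : ℂ)))).charpoly
      = (X + C (((c1 * (∑ j, k j ^ 2) + φu) : ℝ) : ℂ)) ^ (n - 1)
        * (X ^ 2 + C ((((c1 + c2) * (∑ j, k j ^ 2) + φu) : ℝ) : ℂ) * X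
            + C (((c3 * (1 + φρ) * (∑ j, k j ^ 2)) : ℝ) : ℂ)) := by
  refine Polynomial.eq_of_infinite_eval_eq _ _
    (Set.Infinite.mono (s := {0}ᶜ) ?_ (Set.finite_singleton (0 : ℂ)).infinite_compl)
  intro x hx
  have hx0 : x ≠ 0 := hx
  rw [Set.mem_ofPred_eq, eval_charpoly]
  set α : ℂ := (((c1 * (∑ j, k j ^ 2) + φu) : ℝ) : ℂ) with hα
  let K : Fin n → ℂ := fun j => (k j : ℂ)
  have e : ∀ (B : Matrix Unit (Fin n) ℂ) (C : Matrix (Fin n) Unit ℂ) (D : Matrix (Fin n) (Fin n) ℂ),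
      scalar (Unit ⊕ Fin n) x - fromBlocks (0 : Matrix Unit Unit ℂ) B C D
        = fromBlocks (x • (1 : Matrix Unit Unit ℂ)) (-B) (-C) (x • 1 - D) := by
    intro B C D
    ext (i | i) (j | j) <;> simp [Matrix.one_apply, diagonal_apply]
  rw [e]
  let _ : Invertible (x • (1 : Matrix Unit Unit ℂ)) :=
    ⟨x⁻¹ • 1, by simp [smul_smul, hx0], by simp [smul_smul, hx0]⟩
  have hinv : ⅟(x • (1 : Matrix Unit Unit ℂ)) = x⁻¹ • 1 := rfl
  rw [det_fromBlocks₁₁, hinv]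
  have hS : ∀ A : Matrix (Fin n) (Fin n) ℂ,
      A = (x + α) • 1 + vecMulVec ((c2 + c3 * (1 + φρ) / x : ℂ) • K) K →
      (x • (1 : Matrix Unit Unit ℂ)).det * A.det = x * ((x + α) ^ (n - 1) *
        ((x + α) + (c2 + c3 * (1 + φρ) / x) * ∑ j, (k j : ℂ) ^ 2)) := by
    rintro A rfl
    rw [det_smul_one_add_vecMulVec n hn]
    simp [dotProduct, K, Finset.mul_sum, pow_two, mul_assoc]
  rw [hS]
  · simp only [eval_mul, eval_pow, eval_add, eval_X, eval_C, hα]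
    push_cast
    field_simp
    ring
  · ext i j
    simp [Matrix.mul_apply, vecMulVec_apply, K, ← hc45]
    field_simp
    ring
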